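/- Let ψ ∈ ℂ^{p²} be a unit vector that is a common eigenvector of every element of the new class C_I. Then for each i = 1,…,p+1 and each basis vector b of B_i, the outcome probability |⟨b, ψ⟩|² equals either 0 or 1/p, and exactly p of the p² basis vectors of B_i have |⟨b, ψ⟩|² = 1/p. -/

import Mathlib

/-!
Pauli operators `U_v` are indexed by `v ∈ (ℤ/p)⁴`, products adding indices up to a phase. For a
vector `a` put `f_a(v) = ⟨a, U_v a⟩`. Completeness of the Pauli operators gives (`parseval`)
`∑_v conj (f_a v) * f_b v = p² |⟨a, b⟩|²`.

If `a` is a unit eigenvector of `U_v` then `|f_a v| = 1`; hence a unit vector which is an eigenvector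
of `p²` Pauli operators has `f_a = 0` at all other indices (`pexp_support`). This applies to the
vectors of `B_i`, with the indices of `C_i` and `0`, and to `ψ`, with the indices `k v_i` of the
operators `σ_i^{∘k}`; there are `(p + 1)(p - 1) + 1 = p²` of these, because `k v_i` lies in the class
`C_i` and the classes are disjoint. The supports of `f_b` and `f_ψ` meet exactly in the line spanned
by `v_i`, so that `p² |⟨b, ψ⟩|² = ∑_{k < p} r^k` where `r = conj d * c` for the eigenvalues `d`, `c` of
`σ_i` at `b`, `ψ` (`pexp_mul_pow`). Here `r^p = 1`, so the sum is `p` or `0`. The probabilities add up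
to one, so exactly `p` of them are `1/p`.
-/

open Matrix
open scoped Kronecker

noncomputable section

/-- ω = exp(2πi/p), a primitive p-th root of unity. -/
def omega_p (p : ℕ) : ℂ := Complex.exp (2 * Real.pi * Complex.I / p)

/-- Generalized Pauli X on ℂ^p : X e_j = e_{j+1}. -/
def genX (p : ℕ) : Matrix (ZMod p) (ZMod p) ℂ :=
  Matrix.of fun i j => if i = j + 1 then 1 else 0

/-- Generalized Pauli Z on ℂ^p : Z e_j = ω^j e_j. -/
def genZ (p : ℕ) : Matrix (ZMod p) (ZMod p) ℂ :=
  Matrix.of fun i j => if i = j then omega_p p ^ j.val else 0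

/-- The space of p² × p² complex matrices. -/
abbrev PauliMat (p : ℕ) := Matrix (ZMod p × ZMod p) (ZMod p × ZMod p) ℂ

/-- The set U^{(p²)} of p⁴ two-particle generalized Pauli operators
    (X^m Z^n) ⊗ (X^k Z^l), with m,n,k,l ∈ {0,…,p−1}. -/
def PauliSet (p : ℕ) [NeZero p] : Set (PauliMat p) :=
  { U | ∃ m n k l : ZMod p,
      U = (genX p ^ m.val * genZ p ^ n.val) ⊗ₖ (genX p ^ k.val * genZ p ^ l.val) }

/-- A maximal commuting class: a subset of U^{(p²)} \ {I} of cardinality p² − 1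
    whose elements pairwise commute. -/
def MaxCommClass (p : ℕ) [NeZero p] (C : Set (PauliMat p)) : Prop :=
  C ⊆ PauliSet p \ {1} ∧ C.ncard = p ^ 2 - 1 ∧ ∀ U ∈ C, ∀ V ∈ C, Commute U V

/-- U ∘ V: the unique element of U^{(p²)} such that U·V is a power of ω times it. -/
def circ (p : ℕ) [NeZero p] (U V : PauliMat p) : PauliMat p :=
  @Classical.epsilon _ ⟨(0 : PauliMat p)⟩
    fun W => W ∈ PauliSet p ∧ ∃ j : ℕ, U * V = omega_p p ^ j • W

/-- U^{∘k}: the unique element of U^{(p²)} such that the matrix power U^k is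
    a power of ω times it. -/
def cpow (p : ℕ) [NeZero p] (U : PauliMat p) (k : ZMod p) : PauliMat p :=
  @Classical.epsilon _ ⟨(0 : PauliMat p)⟩
    fun W => W ∈ PauliSet p ∧ ∃ j : ℕ, U ^ k.val = omega_p p ^ j • W

/-- Independence: U^k is not a scalar multiple of V^l for any (k,l) ≠ (0,0). -/
def Indep (p : ℕ) [NeZero p] (U V : PauliMat p) : Prop :=
  ∀ k l : ZMod p, (k, l) ≠ (0, 0) → ∀ c : ℂ, U ^ k.val ≠ c • V ^ l.val

/-- The class ⟨U,V⟩ generated by a pair of independent commuting operators: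
    {U^{∘k} ∘ V^{∘l} : (k,l) ≠ (0,0)}. -/
def genClass (p : ℕ) [NeZero p] (U V : PauliMat p) : Set (PauliMat p) :=
  { W | ∃ k l : ZMod p, (k, l) ≠ (0, 0) ∧ W = circ p (cpow p U k) (cpow p V l) }

/-- A complete set of p² + 1 pairwise disjoint maximal commuting classes. -/
def CompleteSet (p : ℕ) [NeZero p] (S : Set (Set (PauliMat p))) : Prop :=
  S.ncard = p ^ 2 + 1 ∧ (∀ C ∈ S, MaxCommClass p C) ∧ S.Pairwise Disjoint

/-- A family of classes is unextendible if no maximal commuting class is contained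
    in U^{(p²)} \ ({I} ∪ ⋃ F). -/
def Unextendible (p : ℕ) [NeZero p] (F : Set (Set (PauliMat p))) : Prop :=
  ¬ ∃ C : Set (PauliMat p), MaxCommClass p C ∧ C ⊆ PauliSet p \ ({1} ∪ ⋃₀ F)

/-! ### Pauli operators and their multiplication law -/

/-- Index set of the two-particle Pauli operators: a shift part and a phase part. -/
abbrev PIdx (p : ℕ) := (ZMod p × ZMod p) × (ZMod p × ZMod p)

/-- The operator `X^{a₁} Z^{b₁} ⊗ X^{a₂} Z^{b₂}`, indexed by the pair `(a, b)` of its shift vector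
and its phase vector. -/
def pauli (p : ℕ) [NeZero p] (v : PIdx p) : PauliMat p :=
  (genX p ^ v.1.1.val * genZ p ^ v.2.1.val) ⊗ₖ (genX p ^ v.1.2.val * genZ p ^ v.2.2.val)

/-- The standard bilinear form on `(ℤ/p)²`. -/
def dotp {p : ℕ} (b j : ZMod p × ZMod p) : ZMod p := b.1 * j.1 + b.2 * j.2

section
variable {p : ℕ}

lemma omega_ne (j : ℕ) : omega_p p ^ j ≠ 0 := pow_ne_zero _ (Complex.exp_ne_zero _)

lemma p_nsmul (v : PIdx p) : p • v = 0 := by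
  rw [← Nat.cast_smul_eq_nsmul (ZMod p)]; simp

variable [NeZero p]

lemma omega_pow (n : ℕ) : omega_p p ^ n = ZMod.stdAddChar (n : ZMod p) := by
  have h := ZMod.stdAddChar_coe (N := p) (n : ℤ)
  rw [Int.cast_natCast] at h
  rw [h, omega_p, ← Complex.exp_nat_mul]
  congr 1
  push_cast
  ring

lemma genX_pow (m : ℕ) (i j : ZMod p) :
    (genX p ^ m) i j = if i = j + m then 1 else 0 := by
  induction m generalizing i j with
  | zero => simp [Matrix.one_apply]
  | succ m ih =>
    rw [pow_succ, Matrix.mul_apply]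
    simp only [ih]
    simp only [genX, Matrix.of_apply]
    rw [Finset.sum_eq_single (j + 1)]
    · simp [add_assoc, add_comm (1 : ZMod p)]
    · intro t _ ht; simp [ht]
    · simp

lemma genZ_pow (n : ℕ) (i j : ZMod p) :
    (genZ p ^ n) i j = if i = j then ZMod.stdAddChar ((n : ZMod p) * j) else 0 := by
  have : genZ p = Matrix.diagonal (fun j : ZMod p => omega_p p ^ j.val) := by
    ext a b
    simp only [genZ, Matrix.of_apply, Matrix.diagonal_apply]
    split_ifs with h <;> simp [h]
  rw [this, Matrix.diagonal_pow, Matrix.diagonal_apply]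
  split_ifs with h
  · subst h
    rw [Pi.pow_apply, ← pow_mul, omega_pow]
    push_cast
    rw [ZMod.natCast_zmod_val, mul_comm]
  · rfl

lemma pauli_apply (v : PIdx p) (i j : ZMod p × ZMod p) :
    pauli p v i j = if i = j + v.1 then ZMod.stdAddChar (dotp v.2 j) else 0 := by
  have key (m n i j : ZMod p) : (genX p ^ m.val * genZ p ^ n.val) i j
      = if i = j + m then ZMod.stdAddChar (n * j) else 0 := by
    rw [Matrix.mul_apply]
    simp only [genX_pow, genZ_pow]
    rw [Finset.sum_eq_single j]
    · simp
    · intro t _ ht; simp [ht]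
    · simp
  rw [pauli, Matrix.kroneckerMap_apply, key, key, dotp, AddChar.map_add_eq_mul]
  simp only [Prod.ext_iff, Prod.fst_add, Prod.snd_add]
  split_ifs <;> simp_all

lemma pauli_zero : pauli p 0 = 1 := by
  ext i j
  simp [pauli_apply, Matrix.one_apply, dotp]

lemma pauli_mul (v w : PIdx p) :
    pauli p v * pauli p w = ZMod.stdAddChar (dotp v.2 w.1) • pauli p (v + w) := by
  ext i j
  rw [Matrix.mul_apply, Matrix.smul_apply]
  simp only [pauli_apply]
  rw [Finset.sum_eq_single (j + w.1)]
  · simp only [if_true, Prod.fst_add, Prod.snd_add, smul_eq_mul]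
    have h : (i = j + w.1 + v.1) ↔ (i = j + (v.1 + w.1)) := by
      rw [add_assoc, add_comm w.1]
    simp only [h]
    split_ifs
    · rw [← AddChar.map_add_eq_mul, ← AddChar.map_add_eq_mul]
      congr 1
      simp only [dotp, Prod.fst_add, Prod.snd_add]
      ring
    · simp
  · intro t _ ht; simp [ht]
  · simp

lemma pauli_pow (v : PIdx p) (k : ℕ) :
    ∃ j : ℕ, pauli p v ^ k = omega_p p ^ j • pauli p (k • v) := by
  induction k with
  | zero => exact ⟨0, by simp [pauli_zero]⟩
  | succ k ih =>
    obtain ⟨j, hj⟩ := ih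
    refine ⟨j + (dotp (k • v).2 v.1).val, ?_⟩
    rw [pow_succ, hj, Matrix.smul_mul, pauli_mul, smul_smul, succ_nsmul, pow_add,
      omega_pow (dotp _ _).val, ZMod.natCast_zmod_val]

lemma norm_omega (j : ℕ) : ‖omega_p p ^ j‖ = 1 := by
  rw [omega_pow]; exact AddChar.norm_apply _ _

lemma char_ne (x : ZMod p) : (ZMod.stdAddChar x : ℂ) ≠ 0 := by
  have : ‖(ZMod.stdAddChar x : ℂ)‖ = 1 := AddChar.norm_apply _ _
  intro h; simp [h] at this

/-- Distinct Pauli operators are never proportional. -/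
lemma pauli_inj_smul {v w : PIdx p} {c : ℂ} (h : pauli p v = c • pauli p w) : v = w := by
  have e (j : ZMod p × ZMod p) := congrFun (congrFun h (j + v.1)) j
  simp only [Matrix.smul_apply, pauli_apply, if_true, smul_eq_mul, add_right_inj] at e
  have h1 : v.1 = w.1 := by
    by_contra hne
    have := e 0
    rw [if_neg hne, mul_zero] at this
    exact char_ne _ this
  simp only [h1, if_true] at e
  have hc : c = 1 := by simpa [dotp] using (e 0).symm
  subst hc
  simp only [one_mul] at e
  have e1 := ZMod.injective_stdAddChar (e (1, 0))
  have e2 := ZMod.injective_stdAddChar (e (0, 1))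
  simp only [dotp, mul_one, mul_zero, add_zero, zero_add] at e1 e2
  exact Prod.ext h1 (Prod.ext e1 e2)

lemma pauli_injective : Function.Injective (pauli p) := fun v w h =>
  pauli_inj_smul (c := 1) (by simpa using h)

lemma mem_pauliSet {U : PauliMat p} : U ∈ PauliSet p ↔ ∃ v, pauli p v = U := by
  constructor
  · rintro ⟨m, n, k, l, rfl⟩
    exact ⟨((m, k), (n, l)), rfl⟩
  · rintro ⟨v, rfl⟩
    exact ⟨v.1.1, v.2.1, v.1.2, v.2.2, rfl⟩

/-- In terms of indices the operation `U^{∘k}` is scalar multiplication by `k`. -/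
lemma cpow_pauli (v : PIdx p) (k : ZMod p) : cpow p (pauli p v) k = pauli p (k • v) := by
  have hk : k.val • v = k • v := by
    rw [← Nat.cast_smul_eq_nsmul (ZMod p), ZMod.natCast_zmod_val]
  have hex : ∃ W, W ∈ PauliSet p ∧ ∃ j : ℕ, pauli p v ^ k.val = omega_p p ^ j • W := by
    obtain ⟨j, hj⟩ := pauli_pow v k.val
    exact ⟨_, mem_pauliSet.2 ⟨_, rfl⟩, j, hj⟩
  obtain ⟨hm, j, hj⟩ := Classical.epsilon_spec hex
  obtain ⟨j', hj'⟩ := pauli_pow v k.val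
  change cpow p (pauli p v) k ∈ _ at hm
  change _ = _ • cpow p (pauli p v) k at hj
  obtain ⟨w, hw⟩ := mem_pauliSet.1 hm
  rw [← hw] at hj ⊢
  rw [hj', hk] at hj
  congr 1
  symm
  apply pauli_inj_smul (c := (omega_p p ^ j')⁻¹ * omega_p p ^ j)
  rw [← smul_smul, ← hj, smul_smul, inv_mul_cancel₀ (omega_ne _), one_smul]

/-! ### Expectation values and the Parseval identity -/

/-- The expectation value `⟨a, U_v a⟩`. -/
def pexp (a : ZMod p × ZMod p → ℂ) (v : PIdx p) : ℂ := star a ⬝ᵥ (pauli p v *ᵥ a)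

lemma pexp_eq (a : ZMod p × ZMod p → ℂ) (v : PIdx p) :
    pexp a v = ∑ j, (starRingEnd ℂ (a (j + v.1)) * a j) * ZMod.stdAddChar (dotp v.2 j) := by
  simp only [pexp, dotProduct, Matrix.mulVec, Finset.mul_sum]
  rw [Finset.sum_comm]
  refine Finset.sum_congr rfl fun j _ => ?_
  rw [Finset.sum_eq_single (j + v.1)]
  · simp [pauli_apply]; ring
  · intro t _ ht; simp [pauli_apply, ht]
  · simp

lemma sum_char (x : ZMod p × ZMod p) :
    ∑ b : ZMod p × ZMod p, (ZMod.stdAddChar (dotp b x) : ℂ)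
      = if x = 0 then (p : ℂ) ^ 2 else 0 := by
  simp only [dotp, AddChar.map_add_eq_mul]
  rw [Fintype.sum_prod_type]
  simp only [← Finset.mul_sum]
  rw [← Finset.sum_mul, AddChar.sum_mulShift _ (ZMod.isPrimitive_stdAddChar p),
    AddChar.sum_mulShift _ (ZMod.isPrimitive_stdAddChar p), ZMod.card]
  simp only [Prod.ext_iff, Prod.fst_zero, Prod.snd_zero]
  split_ifs <;> simp_all [sq]

/-- Plancherel formula for the Fourier transform on `(ℤ/p)²`. -/
lemma plancherel (g h : ZMod p × ZMod p → ℂ) :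
    ∑ b, starRingEnd ℂ (∑ j, g j * ZMod.stdAddChar (dotp b j)) *
        (∑ j, h j * ZMod.stdAddChar (dotp b j))
      = (p : ℂ) ^ 2 * ∑ j, starRingEnd ℂ (g j) * h j := by
  have step (b : ZMod p × ZMod p) :
      starRingEnd ℂ (∑ j, g j * ZMod.stdAddChar (dotp b j)) *
        (∑ j, h j * ZMod.stdAddChar (dotp b j))
      = ∑ j, ∑ j', starRingEnd ℂ (g j) * h j' * ZMod.stdAddChar (dotp b (j' - j)) := by
    rw [map_sum, Finset.sum_mul_sum]
    refine Finset.sum_congr rfl fun j _ => Finset.sum_congr rfl fun j' _ => ?_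
    have : dotp b (j' - j) = -dotp b j + dotp b j' := by
      simp only [dotp, Prod.fst_sub, Prod.snd_sub]; ring
    rw [this, AddChar.map_add_eq_mul, AddChar.map_neg_eq_conj, map_mul]
    ring
  simp only [step]
  rw [Finset.sum_comm, Finset.mul_sum]
  refine Finset.sum_congr rfl fun j _ => ?_
  rw [Finset.sum_comm]
  simp only [← Finset.mul_sum, sum_char, sub_eq_zero]
  simp [mul_comm]

/-- Completeness of the Pauli operators: `∑_v ⟨a, U_v a⟩* ⟨b, U_v b⟩ = p² |⟨a, b⟩|²`, the Parseval
identity for the Hilbert–Schmidt inner product of the projections on `a` and `b`. -/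
lemma parseval (a b : ZMod p × ZMod p → ℂ) :
    ∑ v, starRingEnd ℂ (pexp a v) * pexp b v
      = (p : ℂ) ^ 2 * ((‖∑ m, starRingEnd ℂ (a m) * b m‖ ^ 2 : ℝ) : ℂ) := by
  rw [Fintype.sum_prod_type]
  simp only [pexp_eq, plancherel]
  rw [← Finset.mul_sum]
  congr 1
  rw [Complex.ofReal_pow, ← Complex.mul_conj', map_sum, Finset.sum_mul_sum, Finset.sum_comm]
  refine Finset.sum_congr rfl fun j _ => ?_
  symm
  rw [← Equiv.sum_comp (Equiv.addLeft j)]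
  refine Finset.sum_congr rfl fun A _ => ?_
  simp only [map_mul, Complex.conj_conj, Equiv.coe_addLeft]
  ring

/-! ### Expectation values in eigenvectors -/

lemma pexp_zero {a : ZMod p × ZMod p → ℂ} (ha : ∑ m, starRingEnd ℂ (a m) * a m = 1) :
    pexp a 0 = 1 := by
  rw [pexp, pauli_zero, Matrix.one_mulVec]; exact ha

lemma mulVec_pow {M : PauliMat p} {a : ZMod p × ZMod p → ℂ} {d : ℂ} (h : M *ᵥ a = d • a) (k : ℕ) :
    (M ^ k) *ᵥ a = d ^ k • a := by
  induction k with
  | zero => simp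
  | succ k ih => rw [pow_succ', ← Matrix.mulVec_mulVec, ih, Matrix.mulVec_smul, h, smul_smul,
      pow_succ]

lemma pexp_pow {a : ZMod p × ZMod p → ℂ} (ha : ∑ m, starRingEnd ℂ (a m) * a m = 1)
    {v : PIdx p} {d : ℂ} (h : pauli p v *ᵥ a = d • a) {k j : ℕ}
    (hj : pauli p v ^ k = omega_p p ^ j • pauli p (k • v)) :
    omega_p p ^ j * pexp a (k • v) = d ^ k := by
  have h1 := mulVec_pow h k
  rw [hj, Matrix.smul_mulVec] at h1
  have h2 := congrArg (fun x => star a ⬝ᵥ x) h1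
  simp only [dotProduct_smul, smul_eq_mul] at h2
  rw [pexp, h2, show star a ⬝ᵥ a = 1 from ha, mul_one]

/-- The phase relating `U_v^k` and `U_{kv}` cancels from the product of the two expectations. -/
lemma pexp_mul_pow {a b : ZMod p × ZMod p → ℂ} (ha : ∑ m, starRingEnd ℂ (a m) * a m = 1)
    (hb : ∑ m, starRingEnd ℂ (b m) * b m = 1)
    {v : PIdx p} {d c : ℂ} (hd : pauli p v *ᵥ a = d • a) (hc : pauli p v *ᵥ b = c • b) (k : ℕ) :
    starRingEnd ℂ (pexp a (k • v)) * pexp b (k • v) = (starRingEnd ℂ d * c) ^ k := by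
  obtain ⟨j, hj⟩ := pauli_pow v k
  rw [mul_pow, ← map_pow, ← pexp_pow ha hd hj, ← pexp_pow hb hc hj, map_mul]
  have h : starRingEnd ℂ (omega_p p ^ j) * omega_p p ^ j = 1 := by
    rw [Complex.conj_mul', norm_omega]; simp
  linear_combination (-starRingEnd ℂ (pexp a (k • v)) * pexp b (k • v)) * h

/-- Expectation of a Pauli operator in one of its unit eigenvectors is a phase. -/
lemma norm_pexp {a : ZMod p × ZMod p → ℂ} (ha : ∑ m, starRingEnd ℂ (a m) * a m = 1)
    {v : PIdx p} {d : ℂ} (hd : pauli p v *ᵥ a = d • a) (k : ℕ) : ‖pexp a (k • v)‖ = 1 := by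
  obtain ⟨j, hj⟩ := pauli_pow v p
  have h1 := congrArg norm (pexp_pow ha hd hj)
  rw [norm_mul, norm_omega, p_nsmul, pexp_zero ha, norm_one, norm_pow, one_mul] at h1
  have h2 : ‖d‖ = 1 := (pow_eq_one_iff_of_nonneg (norm_nonneg _) (NeZero.ne p)).1 h1.symm
  obtain ⟨j, hj⟩ := pauli_pow v k
  have h3 := congrArg norm (pexp_pow ha hd hj)
  rwa [norm_mul, norm_omega, norm_pow, h2, one_pow, one_mul] at h3

/-- If `p²` expectation values of a unit vector are phases, they exhaust the Parseval sum, so that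
all the other ones vanish. -/
lemma pexp_support {a : ZMod p × ZMod p → ℂ} (ha : ∑ m, starRingEnd ℂ (a m) * a m = 1)
    (T : Finset (PIdx p)) (hT : T.card = p ^ 2) (h : ∀ v ∈ T, ‖pexp a v‖ = 1)
    {v : PIdx p} (hv : v ∉ T) : pexp a v = 0 := by
  have h1 := parseval a a
  rw [ha] at h1
  simp only [Complex.conj_mul', norm_one] at h1
  have h2 : ∑ v, ‖pexp a v‖ ^ 2 = (p : ℝ) ^ 2 := by
    have : ((∑ v, ‖pexp a v‖ ^ 2 : ℝ) : ℂ) = (((p : ℝ) ^ 2 : ℝ) : ℂ) := by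
      push_cast; rw [h1]; simp
    exact_mod_cast this
  have h3 : ∑ v ∈ T, ‖pexp a v‖ ^ 2 = (p : ℝ) ^ 2 := by
    rw [Finset.sum_congr rfl fun v hv => by rw [h v hv]]
    simp [hT]
  rw [← Finset.sum_add_sum_compl T, h3, add_eq_left,
    Finset.sum_eq_zero_iff_of_nonneg fun _ _ => by positivity] at h2
  simpa using h2 v (by simpa using hv)

end

/-! ### Outcome probabilities -/

/-- If ψ is a common unit eigenvector of the new class
C_I = {σ_i^{∘k} : i, k ≠ 0}, then for each i and each basis vector b of B_i the
outcome probability |⟨b,ψ⟩|² is 0 or 1/p, and exactly p of the p² basis vectors of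
B_i have probability 1/p. -/
theorem stmt19 (p : ℕ) [NeZero p] (hp : p.Prime) (hodd : Odd p)
    (C : Fin (p + 1) → Set (PauliMat p))
    (hmcc : ∀ i, MaxCommClass p (C i))
    (hdisj : ∀ i j, i ≠ j → Disjoint (C i) (C j))
    (σ : Fin (p + 1) → PauliMat p) (hσ : ∀ i, σ i ∈ C i)
    (hcomm : ∀ i j : Fin (p + 1), ∀ k l : ZMod p, k ≠ 0 → l ≠ 0 →
      Commute (cpow p (σ i) k) (cpow p (σ j) l))
    (B : Fin (p + 1) → (ZMod p × ZMod p) → (ZMod p × ZMod p → ℂ))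
    (hBon : ∀ i, ∀ x y : ZMod p × ZMod p,
      (∑ m : ZMod p × ZMod p, starRingEnd ℂ (B i x m) * B i y m)
        = if x = y then 1 else 0)
    (hBeig : ∀ i, ∀ x : ZMod p × ZMod p, ∀ M ∈ C i,
      ∃ c : ℂ, M.mulVec (B i x) = c • B i x)
    (ψ : ZMod p × ZMod p → ℂ)
    (hψ : (∑ m : ZMod p × ZMod p, starRingEnd ℂ (ψ m) * ψ m) = 1)
    (hψeig : ∀ W ∈ {W : PauliMat p | ∃ i : Fin (p + 1), ∃ k : ZMod p,
        k ≠ 0 ∧ W = cpow p (σ i) k},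
      ∃ c : ℂ, W.mulVec ψ = c • ψ)
    (q : Fin (p + 1) → (ZMod p × ZMod p) → ℝ)
    (hq : ∀ i x, q i x = ‖∑ m : ZMod p × ZMod p, starRingEnd ℂ (B i x m) * ψ m‖ ^ 2) :
    (∀ i, ∀ x : ZMod p × ZMod p, q i x = 0 ∨ q i x = (p : ℝ)⁻¹) ∧
    (∀ i, {x : ZMod p × ZMod p | q i x = (p : ℝ)⁻¹}.ncard = p) := by
  classical
  have : Fact p.Prime := ⟨hp⟩
  have hnk (v : PIdx p) (k : ZMod p) : k.val • v = k • v := by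
    rw [← Nat.cast_smul_eq_nsmul (ZMod p), ZMod.natCast_zmod_val]
  choose v hv using fun i => mem_pauliSet.1 ((hmcc i).1 (hσ i)).1
  have hv0 (i) : v i ≠ 0 := by
    intro h
    have h1 := ((hmcc i).1 (hσ i)).2
    rw [← hv i, h, pauli_zero] at h1
    exact h1 rfl
  let S : Fin (p + 1) → Finset (PIdx p) := fun i => Finset.univ.filter fun w => pauli p w ∈ C i
  have hS (i w) : w ∈ S i ↔ pauli p w ∈ C i := by simp [S]
  have hS0 (i) : (0 : PIdx p) ∉ S i := by
    rw [hS, pauli_zero]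
    exact fun h => ((hmcc i).1 h).2 rfl
  have hp1 : 1 ≤ p ^ 2 := Nat.one_le_pow _ _ hp.pos
  have hScard (i) : (insert 0 (S i)).card = p ^ 2 := by
    rw [Finset.card_insert_of_notMem (hS0 i)]
    have h1 : C i = pauli p '' (S i : Set (PIdx p)) := by
      ext U
      constructor
      · intro hU
        obtain ⟨w, rfl⟩ := mem_pauliSet.1 ((hmcc i).1 hU).1
        exact ⟨w, by simpa [S] using hU, rfl⟩
      · rintro ⟨w, hw, rfl⟩
        simpa [S] using hw
    have h2 := (hmcc i).2.1
    rw [h1, Set.ncard_image_of_injective _ pauli_injective, Set.ncard_coe_finset] at h2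
    omega
  have hSd {i j w} (hi : w ∈ S i) (hj : w ∈ S j) : i = j := by
    by_contra hne
    exact Set.disjoint_left.1 (hdisj i j hne) ((hS _ _).1 hi) ((hS _ _).1 hj)
  have hBu (i x) : ∑ m, starRingEnd ℂ (B i x m) * B i x m = 1 := by simp [hBon]
  have hnB (i x) : ∀ w ∈ insert 0 (S i), ‖pexp (B i x) w‖ = 1 := by
    intro w hw
    rcases Finset.mem_insert.1 hw with rfl | hw
    · simp [pexp_zero (hBu i x)]
    · obtain ⟨c, hc⟩ := hBeig i x _ ((hS i w).1 hw)
      simpa using norm_pexp (hBu i x) hc 1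
  have hBsupp (i x w) (hw : w ∉ insert 0 (S i)) : pexp (B i x) w = 0 :=
    pexp_support (hBu i x) _ (hScard i) (hnB i x) hw
  -- Multiples of `v i` stay in the class: any further operator sharing the eigenbasis `B i` would
  -- violate the Parseval bound.
  have hkS (i) (k : ZMod p) (hk : k ≠ 0) : k • v i ∈ S i := by
    by_contra hn
    have h0 : k • v i ≠ 0 := smul_ne_zero hk (hv0 i)
    have h1 := hBsupp i 0 (k • v i) (by simp [h0, hn])
    obtain ⟨c, hc⟩ := hBeig i 0 _ (hσ i)
    rw [← hv i] at hc
    have h2 := norm_pexp (hBu i 0) hc k.val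
    rw [hnk, h1] at h2
    simp at h2
  let L : Finset (PIdx p) := (Finset.univ ×ˢ Finset.univ.erase (0 : ZMod p)).image
    fun t : Fin (p + 1) × ZMod p => t.2 • v t.1
  have hL (w) : w ∈ L ↔ ∃ i, ∃ k : ZMod p, k ≠ 0 ∧ k • v i = w := by
    simp [L]
  have hL0 : (0 : PIdx p) ∉ L := by
    rw [hL]
    rintro ⟨i, k, hk, h⟩
    exact smul_ne_zero hk (hv0 i) h
  have hLcard : (insert 0 L).card = p ^ 2 := by
    rw [Finset.card_insert_of_notMem hL0, Finset.card_image_of_injOn]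
    · rw [Finset.card_product, Finset.card_erase_of_mem (Finset.mem_univ _), Finset.card_univ,
        Finset.card_univ, ZMod.card, Fintype.card_fin]
      obtain ⟨n, rfl⟩ : ∃ n, p = n + 1 := ⟨p - 1, by have := hp.pos; omega⟩
      simp only [Nat.add_sub_cancel]
      ring
    · rintro ⟨i, k⟩ h ⟨j, l⟩ h' he
      simp only [Finset.coe_product, Set.mem_prod, Finset.mem_coe, Finset.mem_erase,
        Finset.mem_univ, and_true, true_and] at h h'
      simp only at he
      have hij : i = j := hSd (hkS i k h) (by rw [he]; exact hkS j l h')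
      subst hij
      rw [smul_left_injective (ZMod p) (hv0 i) he]
  have hψL : ∀ w ∈ insert 0 L, ‖pexp ψ w‖ = 1 := by
    intro w hw
    rcases Finset.mem_insert.1 hw with rfl | hw
    · simp [pexp_zero hψ]
    · obtain ⟨i, k, hk, rfl⟩ := (hL w).1 hw
      obtain ⟨c, hc⟩ := hψeig (pauli p (k • v i)) ⟨i, k, hk, by rw [← hv i, cpow_pauli]⟩
      simpa using norm_pexp hψ hc 1
  have hψsupp (w) (hw : w ∉ insert 0 L) : pexp ψ w = 0 := pexp_support hψ _ hLcard hψL hw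
  have hpC : (p : ℂ) ≠ 0 := by exact_mod_cast hp.ne_zero
  -- Only the multiples of `v i` contribute to the Parseval sum, which becomes a geometric sum.
  have hmain (i x) : ∃ r : ℂ, r ^ p = 1 ∧
      (p : ℂ) ^ 2 * (q i x : ℂ) = ∑ k ∈ Finset.range p, r ^ k := by
    obtain ⟨d, hd⟩ := hBeig i x _ (hσ i)
    obtain ⟨c, hc⟩ := hψeig (pauli p (v i)) ⟨i, 1, one_ne_zero, by
      rw [← hv i, cpow_pauli, one_smul]⟩
    rw [← hv i] at hd
    have key := pexp_mul_pow (hBu i x) hψ hd hc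
    refine ⟨starRingEnd ℂ d * c, ?_, ?_⟩
    · rw [← key, p_nsmul, pexp_zero (hBu i x), pexp_zero hψ]; simp
    · rw [hq, ← parseval]
      have hsub : ∑ w ∈ Finset.univ.image (fun k : ZMod p => k • v i),
          starRingEnd ℂ (pexp (B i x) w) * pexp ψ w
          = ∑ w, starRingEnd ℂ (pexp (B i x) w) * pexp ψ w := by
        refine Finset.sum_subset (Finset.subset_univ _) fun w _ hw => ?_
        have hw' (k : ZMod p) : k • v i ≠ w := fun h =>
          hw (Finset.mem_image.2 ⟨k, Finset.mem_univ _, h⟩)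
        have hw0 : w ≠ 0 := fun h => hw' 0 (by simp [h])
        by_cases hwS : w ∈ S i
        · rw [hψsupp w, mul_zero]
          simp only [Finset.mem_insert, hw0, false_or, hL]
          rintro ⟨j, k, hk, rfl⟩
          have hij := hSd hwS (hkS j k hk)
          subst hij
          exact hw' k rfl
        · rw [hBsupp i x w (by simp [hw0, hwS])]; simp
      rw [← hsub, Finset.sum_image fun a _ b _ h => smul_left_injective (ZMod p) (hv0 i) h]
      refine Finset.sum_bij (fun k _ => k.val) ?_ ?_ ?_ ?_
      · intro k _; simpa using ZMod.val_lt k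
      · intro a _ b _ h; exact ZMod.val_injective p h
      · intro n hn
        exact ⟨(n : ZMod p), Finset.mem_univ _, ZMod.val_cast_of_lt (Finset.mem_range.1 hn)⟩
      · intro k _
        rw [← key, hnk]
  have hpR : (p : ℝ) ≠ 0 := by exact_mod_cast hp.ne_zero
  have hq01 (i x) : q i x = 0 ∨ q i x = (p : ℝ)⁻¹ := by
    obtain ⟨r, hr, hs⟩ := hmain i x
    by_cases h1 : r = 1
    · right
      subst h1
      have h2 : (p : ℝ) ^ 2 * q i x = p := by
        simp only [one_pow, Finset.sum_const, Finset.card_range, nsmul_eq_mul, mul_one] at hs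
        exact_mod_cast hs
      field_simp
      apply mul_left_cancel₀ hpR
      linear_combination h2
    · left
      have h2 : ∑ k ∈ Finset.range p, r ^ k = 0 := by
        rw [geom_sum_eq h1, hr, sub_self, zero_div]
      rw [h2] at hs
      simpa [hpC] using hs
  refine ⟨hq01, fun i => ?_⟩
  -- Parseval in the orthonormal basis `B i`: the probabilities add up to one.
  have htot : ∑ x, q i x = 1 := by
    let M : PauliMat p := Matrix.of fun x m => starRingEnd ℂ (B i x m)
    have hM : M * Mᴴ = 1 := by
      ext x y
      simp [M, Matrix.mul_apply, Matrix.conjTranspose_apply, Matrix.one_apply, hBon]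
    have hM' : Mᴴ * M = 1 := mul_eq_one_comm.1 hM
    have h1 : star (M *ᵥ ψ) ⬝ᵥ (M *ᵥ ψ) = 1 := by
      rw [Matrix.star_mulVec, Matrix.dotProduct_mulVec, Matrix.vecMul_vecMul, hM',
        Matrix.vecMul_one]
      exact hψ
    have h2 : ((∑ x, q i x : ℝ) : ℂ) = 1 := by
      rw [← h1]
      push_cast
      refine Finset.sum_congr rfl fun x _ => ?_
      rw [hq, Complex.ofReal_pow, ← Complex.conj_mul']
      rfl
    exact_mod_cast h2
  have hpi : (p : ℝ)⁻¹ ≠ 0 := inv_ne_zero hpR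
  have hval (x) : q i x = if q i x = (p : ℝ)⁻¹ then (p : ℝ)⁻¹ else 0 := by
    rcases hq01 i x with h | h
    · rw [h, if_neg hpi.symm]
    · rw [if_pos h, h]
  rw [Finset.sum_congr rfl fun x _ => hval x, ← Finset.sum_filter, Finset.sum_const,
    nsmul_eq_mul, mul_inv_eq_one₀ hpR] at htot
  rw [Set.ncard_eq_toFinset_card', Set.toFinset_ofPred]
  exact_mod_cast htot
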